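/- arXiv:1409.6352 — 2 statements merged into one kernel-verified Lean document; each statement's English description precedes it below -/
import Mathlib

section
/- For a point z = x + iy of the upper half-plane ℍ, the following are equivalent: (i) there exist integers a and q ≥ 1 with gcd(a,q) = 1 such that |z − (a/q + i/(2q²))| < 1/(2q²) (i.e., z lies in the interior of some Ford disk); (ii) there exists γ = (a b; c d) ∈ SL(2,ℤ) with c ≠ 0 such that Im(γ·z) > 1, where γ·z = (az+b)/(cz+d). -/
open Complex

/-!
The element `γ = (a b; c d)` sends `-d/c` to `∞`, and it pulls the horoball `{Im > 1}` at `∞` back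
to the Ford disk at `-d/c`: both `1 < Im (γ • z)` and membership in that disk say that
`|c z + d|² < Im z`. By Bézout, every reduced fraction occurs as `-d/c`.
-/

/-- The interior of the disk bounded by the Ford circle at `a / q`. The denominator may be
negative, so that the bottom row of a matrix can be used as it stands; for `q = 0` the radius is the
junk value `0` and the disk is empty. -/
def fordDisk (a q : ℤ) : Set ℂ :=
  Metric.ball ((a : ℂ) / q + I / (2 * (q : ℂ) ^ 2)) (1 / (2 * (q : ℝ) ^ 2))

theorem mem_fordDisk_iff_norm_sub_lt {a q : ℤ} {z : ℂ} :
    z ∈ fordDisk a q ↔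
      ‖z - ((a : ℂ) / q + I / (2 * (q : ℂ) ^ 2))‖ < 1 / (2 * (q : ℝ) ^ 2) :=
  mem_ball_iff_norm

theorem fordDisk_neg_neg (a q : ℤ) : fordDisk (-a) (-q) = fordDisk a q := by
  simp only [fordDisk, Int.cast_neg, neg_div_neg_eq, neg_sq]

theorem norm_sub_ofReal_mul_I_lt_iff {r : ℝ} (hr : 0 ≤ r) (w : ℂ) :
    ‖w - r * I‖ < r ↔ normSq w < 2 * r * w.im := by
  have expand : normSq (w - r * I) = normSq w - 2 * r * w.im + r ^ 2 := by
    simp only [normSq_apply, sub_re, sub_im, re_ofReal_mul, im_ofReal_mul, I_re, I_im]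
    ring
  rw [← sq_lt_sq₀ (norm_nonneg _) hr, ← normSq_eq_norm_sq, expand, add_lt_iff_neg_right, sub_neg]

theorem mem_fordDisk_iff_normSq_lt {q : ℤ} (hq : q ≠ 0) (a : ℤ) (z : ℂ) :
    z ∈ fordDisk a q ↔ normSq (q * z - a) < z.im := by
  have hqC : (q : ℂ) ≠ 0 := Int.cast_ne_zero.mpr hq
  have hq_sq : 0 < (q : ℝ) ^ 2 := by positivity
  have center : z - ((a : ℂ) / q + I / (2 * (q : ℂ) ^ 2)) =
      (z - a / q) - (1 / (2 * (q : ℝ) ^ 2) : ℝ) * I := by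
    push_cast
    ring
  have diameter : 2 * (1 / (2 * (q : ℝ) ^ 2)) * z.im = z.im / q ^ 2 := by
    ring
  have im_shift : (z - a / q).im = z.im := by
    simp [div_im]
  have scale : normSq (q * z - a) = q ^ 2 * normSq (z - a / q) := by
    rw [sq, ← normSq_intCast, ← normSq_mul, mul_sub, mul_div_cancel₀ _ hqC]
  rw [mem_fordDisk_iff_norm_sub_lt, center, norm_sub_ofReal_mul_I_lt_iff (by positivity), im_shift,
    scale, diameter, lt_div_iff₀' hq_sq]

theorem lt_im_moebius_iff {a b c d : ℝ} (hdet : a * d - b * c = 1) (t : ℝ) {z : ℂ}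
    (hz : z.im ≠ 0) :
    t < ((a * z + b) / (c * z + d)).im ↔ t * normSq (c * z + d) < z.im := by
  let g := Matrix.GeneralLinearGroup.mkOfDetNeZero !![a, b; c, d] (by simp [hdet])
  have him : ((a * z + b) / (c * z + d)).im = z.im / normSq (c * z + d) := by
    simpa [UpperHalfPlane.num, UpperHalfPlane.denom, g, hdet] using UpperHalfPlane.moebius_im g z
  have hpos : 0 < normSq (c * z + d) := UpperHalfPlane.normSq_denom_pos g hz
  rw [him, lt_div_iff₀ hpos]

theorem one_lt_im_moebius_iff_mem_fordDisk {a b c d : ℤ} (hdet : a * d - b * c = 1) (hc : c ≠ 0)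
    {z : ℂ} (hz : z.im ≠ 0) :
    1 < ((a * z + b) / (c * z + d)).im ↔ z ∈ fordDisk (-d) c := by
  have hdetR : (a : ℝ) * d - b * c = 1 := mod_cast hdet
  simpa [mem_fordDisk_iff_normSq_lt hc] using lt_im_moebius_iff hdetR 1 hz

/-- A point `z` of the upper half-plane lies in the interior of some Ford disk if and only if
some `γ ∈ SL(2,ℤ)` with lower-left entry `c ≠ 0` moves `z` to a point of imaginary part `> 1`. -/
theorem mem_fordDisk_iff_exists_sl2
    (z : ℂ) (hz : 0 < z.im) :
    (∃ a q : ℤ, 1 ≤ q ∧ Int.gcd a q = 1 ∧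
        ‖z - ((a : ℂ) / q + Complex.I / (2 * (q : ℂ) ^ 2))‖ < 1 / (2 * (q : ℝ) ^ 2))
      ↔
    (∃ a b c d : ℤ, a * d - b * c = 1 ∧ c ≠ 0 ∧
        1 < ((((a : ℂ) * z + b) / ((c : ℂ) * z + d)).im)) := by
  simp only [← mem_fordDisk_iff_norm_sub_lt]
  constructor
  · rintro ⟨a, q, hq, hgcd, hmem⟩
    obtain ⟨u, v, bezout⟩ := Int.isCoprime_iff_gcd_eq_one.mpr hgcd
    have hdet : -u * -a - -v * q = 1 := by linear_combination bezout
    have hq0 : q ≠ 0 := by lia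
    refine ⟨-u, -v, q, -a, hdet, hq0, ?_⟩
    rwa [one_lt_im_moebius_iff_mem_fordDisk hdet hq0 hz.ne', neg_neg]
  · rintro ⟨a, b, c, d, hdet, hc, him⟩
    rw [one_lt_im_moebius_iff_mem_fordDisk hdet hc hz.ne'] at him
    rcases hc.lt_or_gt with hneg | hpos
    · refine ⟨d, -c, by lia, ?_, by rwa [← fordDisk_neg_neg, neg_neg]⟩
      exact Int.isCoprime_iff_gcd_eq_one.mp ⟨a, b, by linear_combination hdet⟩
    · refine ⟨-d, c, by lia, ?_, him⟩
      exact Int.isCoprime_iff_gcd_eq_one.mp ⟨-a, -b, by linear_combination hdet⟩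
end

section
/- There exists an absolute constant C > 0 such that for all integers Q ≥ 2 and all integers D with 2 ≤ D ≤ Q, one has |(2/Q) · Σ_{1 ≤ d ≤ D} (μ(d)/d) · Σ_{m=1}^{⌊Q/d⌋} √(1 − d²m²/Q²) − 3/π| ≤ C·(1/D + (log D)/Q), where μ is the Möbius function. -/
open scoped ArithmeticFunction

/-!
For fixed `d` the inner sum is a right Riemann sum, with step `d / Q`, of the antitone function
`t ↦ √(1 - t ^ 2)` on `[0, 1]`, hence equals `(Q / d) * (π / 4) + O(1)`. Weighted by `μ d / d`, the
errors add up to `O(1 + log D)` and the main terms give `Q * (π / 4)` times a partial sum of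
`∑ μ d / d ^ 2 = 6 / π ^ 2`, whose tail is at most `1 / D`. After division by `Q`, the stray
`1 / Q` is absorbed by `1 / Q ≤ 1 / D + log D / Q`, which follows from `1 - 1 / D ≤ log D`.
-/

section RiemannSum

open Set MeasureTheory

variable {f : ℝ → ℝ} {a b : ℝ}

lemma sum_Icc_one_le_integral_of_antitoneOn {N : ℕ} (hf : AntitoneOn f (Icc 0 N)) :
    ∑ m ∈ Finset.Icc 1 N, f m ≤ ∫ x in 0..(N : ℝ), f x := by
  rw [← Nat.cast_zero] at hf ⊢
  have h := hf.sum_le_integral_Ico N.zero_le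
  rwa [Finset.sum_Ico_add' (fun m : ℕ ↦ f m), zero_add, Finset.Ico_add_one_right_eq_Icc] at h

lemma integral_add_le_add_sum_Icc_one_of_antitoneOn {N : ℕ} (hf : AntitoneOn f (Icc 0 N)) :
    (∫ x in 0..(N : ℝ), f x) + f N ≤ f 0 + ∑ m ∈ Finset.Icc 1 N, f m := by
  rw [← Nat.cast_zero] at hf ⊢
  calc (∫ x in ((0 : ℕ) : ℝ)..N, f x) + f N ≤ ∑ m ∈ Finset.Ico 0 N, f m + f N := by
        gcongr
        exact hf.integral_le_sum_Ico N.zero_le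
    _ = f (0 : ℕ) + ∑ m ∈ Finset.Icc 1 N, f m := by
        rw [← Finset.sum_Ico_succ_top N.zero_le (fun m : ℕ ↦ f m),
          Finset.sum_eq_sum_Ico_succ_bot N.add_one_pos, zero_add, Finset.Ico_add_one_right_eq_Icc]

lemma integral_le_mul_of_antitoneOn (hab : a ≤ b) (hf : AntitoneOn f (Icc a b)) :
    ∫ x in a..b, f x ≤ (b - a) * f a := by
  have hint : IntervalIntegrable f volume a b :=
    AntitoneOn.intervalIntegrable (by rwa [uIcc_of_le hab])
  calc ∫ x in a..b, f x ≤ ∫ _ in a..b, f a :=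
        intervalIntegral.integral_mono_on hab hint intervalIntegrable_const fun x hx ↦
          hf (left_mem_Icc.2 hab) hx hx.1
    _ = (b - a) * f a := by rw [intervalIntegral.integral_const, smul_eq_mul]

lemma integral_nonneg_of_antitoneOn (hab : a ≤ b) (hf : AntitoneOn f (Icc a b)) (hb : 0 ≤ f b) :
    0 ≤ ∫ x in a..b, f x :=
  intervalIntegral.integral_nonneg hab fun _ hx ↦ hb.trans (hf hx (right_mem_Icc.2 hab) hx.2)

lemma abs_sum_Icc_floor_sub_integral_le (ha : 0 ≤ a) (hf : AntitoneOn f (Icc 0 a))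
    (hfa : 0 ≤ f a) :
    |∑ m ∈ Finset.Icc 1 ⌊a⌋₊, f m - ∫ x in 0..a, f x| ≤ f 0 := by
  set N := ⌊a⌋₊
  have hN₀ : (0 : ℝ) ≤ N := N.cast_nonneg
  have hNa : (N : ℝ) ≤ a := Nat.floor_le ha
  have hfl : AntitoneOn f (Icc 0 N) := hf.mono (Icc_subset_Icc_right hNa)
  have hfr : AntitoneOn f (Icc N a) := hf.mono (Icc_subset_Icc_left hN₀)
  have hsplit : (∫ x in 0..(N : ℝ), f x) + ∫ x in (N : ℝ)..a, f x = ∫ x in 0..a, f x :=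
    intervalIntegral.integral_add_adjacent_intervals
      (AntitoneOn.intervalIntegrable (by rwa [uIcc_of_le hN₀]))
      (AntitoneOn.intervalIntegrable (by rwa [uIcc_of_le hNa]))
  have hend : ∫ x in (N : ℝ)..a, f x ≤ f N :=
    calc ∫ x in (N : ℝ)..a, f x ≤ (a - N) * f N := integral_le_mul_of_antitoneOn hNa hfr
      _ ≤ f N := mul_le_of_le_one_left
          (hfa.trans (hfr (left_mem_Icc.2 hNa) (right_mem_Icc.2 hNa) hNa))
          (by linarith [Nat.lt_floor_add_one a])
  have hf₀ : 0 ≤ f 0 := hfa.trans (hf (left_mem_Icc.2 ha) (right_mem_Icc.2 ha) ha)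
  rw [abs_le]
  constructor
  · linarith [integral_add_le_add_sum_Icc_one_of_antitoneOn hfl]
  · linarith [sum_Icc_one_le_integral_of_antitoneOn hfl, integral_nonneg_of_antitoneOn hNa hfr hfa]

lemma abs_sum_Icc_floor_div_sub_mul_integral_le (ha : 0 < a) (hf : AntitoneOn f (Icc 0 1))
    (hf₁ : 0 ≤ f 1) :
    |∑ m ∈ Finset.Icc 1 ⌊a⌋₊, f (m / a) - a * ∫ t in 0..1, f t| ≤ f 0 := by
  have hmem : ∀ x ∈ Icc 0 a, x / a ∈ Icc (0 : ℝ) 1 := fun x hx ↦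
    ⟨div_nonneg hx.1 ha.le, div_le_one_of_le₀ hx.2 ha.le⟩
  have hanti : AntitoneOn (fun x ↦ f (x / a)) (Icc 0 a) := fun x hx y hy hxy ↦
    hf (hmem x hx) (hmem y hy) (by gcongr)
  have h := abs_sum_Icc_floor_sub_integral_le ha.le hanti (by rwa [div_self ha.ne'])
  rwa [intervalIntegral.integral_comp_div f ha.ne', zero_div, div_self ha.ne', smul_eq_mul] at h

end RiemannSum

lemma norm_sum_range_succ_sub_le_inv_of_hasSum {E : Type*} [SeminormedAddCommGroup E]
    {f : ℕ → E} {s : E} (hs : HasSum f s) {D : ℕ} (hD : D ≠ 0)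
    (hf : ∀ n > D, ‖f n‖ ≤ ((n : ℝ) ^ 2)⁻¹) :
    ‖∑ n ∈ Finset.range (D + 1), f n - s‖ ≤ (D : ℝ)⁻¹ := by
  have hlim := ((hs.tendsto_sum_nat.comp (Filter.tendsto_add_atTop_nat 1)).const_sub
    (∑ n ∈ Finset.range (D + 1), f n)).norm
  refine le_of_tendsto hlim ?_
  filter_upwards [Filter.eventually_ge_atTop D] with n hn
  calc ‖∑ i ∈ Finset.range (D + 1), f i - ∑ i ∈ Finset.range (n + 1), f i‖
      = ‖∑ i ∈ Finset.Ioc D n, f i‖ := by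
        rw [norm_sub_rev, ← Finset.sum_Ico_eq_sub f (by lia), Finset.Ico_add_one_add_one_eq_Ioc]
    _ ≤ ∑ i ∈ Finset.Ioc D n, ((i : ℝ) ^ 2)⁻¹ :=
        norm_sum_le_of_le _ fun i hi ↦ hf i (Finset.mem_Ioc.1 hi).1
    _ ≤ (D : ℝ)⁻¹ - (n : ℝ)⁻¹ := sum_Ioc_inv_sq_le_sub hD hn
    _ ≤ (D : ℝ)⁻¹ := sub_le_self _ (by positivity)

lemma abs_sum_Icc_div_sub_le_inv_of_hasSum {w : ℕ → ℝ} {c : ℝ} (hw : ∀ n, |w n| ≤ 1)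
    (hc : HasSum (fun n : ℕ ↦ w n / (n : ℝ) ^ 2) c) {D : ℕ} (hD : D ≠ 0) :
    |∑ n ∈ Finset.Icc 1 D, w n / (n : ℝ) ^ 2 - c| ≤ (D : ℝ)⁻¹ := by
  have h := norm_sum_range_succ_sub_le_inv_of_hasSum hc hD fun n _ ↦ by
    rw [norm_div, Real.norm_of_nonneg (sq_nonneg (n : ℝ)), div_eq_mul_inv]
    exact mul_le_of_le_one_left (by positivity) (hw n)
  rwa [Finset.range_eq_Ico, Finset.sum_eq_sum_Ico_succ_bot D.add_one_pos, zero_add,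
    Finset.Ico_add_one_right_eq_Icc, Nat.cast_zero, zero_pow two_ne_zero, div_zero, zero_add] at h

lemma abs_sum_Icc_div_le_mul_one_add_log {g : ℕ → ℝ} {B : ℝ} {D : ℕ}
    (hg : ∀ n ∈ Finset.Icc 1 D, |g n| ≤ B) (hB : 0 ≤ B) :
    |∑ n ∈ Finset.Icc 1 D, g n / n| ≤ B * (1 + Real.log D) := by
  calc |∑ n ∈ Finset.Icc 1 D, g n / n| ≤ ∑ n ∈ Finset.Icc 1 D, B / n :=
        Finset.abs_sum_le_sum_abs _ _ |>.trans <| Finset.sum_le_sum fun n hn ↦ by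
          rw [abs_div, Nat.abs_cast]
          gcongr
          exact hg n hn
    _ = B * (harmonic D : ℝ) := by
        simp only [harmonic_eq_sum_Icc, Rat.cast_sum, Rat.cast_inv, Rat.cast_natCast,
          Finset.mul_sum, div_eq_mul_inv]
    _ ≤ B * (1 + Real.log D) := by
        gcongr
        exact harmonic_le_one_add_log D

lemma abs_sum_div_mul_sum_sub_le {w : ℕ → ℝ} {c : ℝ} (hw : ∀ n, |w n| ≤ 1)
    (hc : HasSum (fun n : ℕ ↦ w n / (n : ℝ) ^ 2) c) {f : ℝ → ℝ}
    (hf : AntitoneOn f (Set.Icc 0 1)) (hf₁ : 0 ≤ f 1) {x : ℝ} (hx : 0 < x) {D : ℕ} (hD : D ≠ 0) :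
    |∑ d ∈ Finset.Icc 1 D, w d / d * ∑ m ∈ Finset.Icc 1 ⌊x / d⌋₊, f (d * m / x)
        - x * c * ∫ t in 0..1, f t|
      ≤ f 0 * (1 + Real.log D) + x * (∫ t in 0..1, f t) / D := by
  set I := ∫ t in 0..1, f t
  set S : ℕ → ℝ := fun d ↦ ∑ m ∈ Finset.Icc 1 ⌊x / d⌋₊, f (d * m / x)
  have hI : 0 ≤ I := integral_nonneg_of_antitoneOn zero_le_one hf hf₁
  have hf₀ : 0 ≤ f 0 := hf₁.trans (hf (by simp) (by simp) zero_le_one)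
  have hinner : ∀ d ∈ Finset.Icc 1 D, |w d * (S d - x / d * I)| ≤ f 0 := fun d hd ↦ by
    have hd₀ : (0 : ℝ) < d := Nat.cast_pos.2 (Finset.mem_Icc.1 hd).1
    have h := abs_sum_Icc_floor_div_sub_mul_integral_le (div_pos hx hd₀) hf hf₁
    simp only [div_div_eq_mul_div, mul_comm _ (d : ℝ)] at h
    rw [abs_mul]
    exact (mul_le_of_le_one_left (abs_nonneg _) (hw d)).trans h
  have hsplit : ∑ d ∈ Finset.Icc 1 D, w d / d * S d - x * c * I
      = ∑ d ∈ Finset.Icc 1 D, w d * (S d - x / d * I) / d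
        + x * I * (∑ d ∈ Finset.Icc 1 D, w d / (d : ℝ) ^ 2 - c) := by
    rw [mul_sub, Finset.mul_sum, ← add_sub_assoc, ← Finset.sum_add_distrib]
    congr 1
    · exact Finset.sum_congr rfl fun d _ ↦ by ring
    · ring
  rw [hsplit]
  refine (abs_add_le _ _).trans (add_le_add (abs_sum_Icc_div_le_mul_one_add_log hinner hf₀) ?_)
  rw [abs_mul, abs_of_nonneg (mul_nonneg hx.le hI), div_eq_mul_inv]
  gcongr
  exact abs_sum_Icc_div_sub_le_inv_of_hasSum hw hc hD

section Moebius

open ArithmeticFunction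

open scoped ArithmeticFunction.Moebius LSeries.notation

lemma hasSum_moebius_div_cpow {s : ℂ} (hs : 1 < s.re) :
    HasSum (fun n : ℕ ↦ (μ n : ℂ) / (n : ℂ) ^ s) (riemannZeta s)⁻¹ := by
  have hs₀ : s ≠ 0 := by
    rintro rfl
    norm_num at hs
  have hval : LSeries ↗μ s = (riemannZeta s)⁻¹ := by
    rw [← LSeries_zeta_eq_riemannZeta hs]
    exact eq_inv_of_mul_eq_one_right (LSeries_zeta_mul_Lseries_moebius hs)
  have h := (LSeriesSummable_moebius_iff.2 hs).LSeriesHasSum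
  rwa [LSeriesHasSum, hval, funext (LSeries.term_of_ne_zero' hs₀ _)] at h

lemma hasSum_moebius_div_sq :
    HasSum (fun n : ℕ ↦ (μ n : ℝ) / (n : ℝ) ^ 2) (6 / Real.pi ^ 2) := by
  have h := hasSum_moebius_div_cpow (s := 2) (by norm_num)
  rw [riemannZeta_two, inv_div] at h
  rw [← Complex.hasSum_ofReal]
  push_cast
  simpa only [Complex.cpow_ofNat] using h

lemma abs_moebius_cast_le_one (n : ℕ) : |(μ n : ℝ)| ≤ 1 := by
  exact_mod_cast abs_moebius_le_one

end Moebius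

lemma integral_sqrt_one_sub_sq_zero_one :
    ∫ t in (0 : ℝ)..1, √(1 - t ^ 2) = Real.pi / 4 := by
  have hint (a b : ℝ) : IntervalIntegrable (fun t ↦ √(1 - t ^ 2)) MeasureTheory.volume a b :=
    Continuous.intervalIntegrable (by fun_prop) a b
  have hsymm : ∫ t in (-1 : ℝ)..0, √(1 - t ^ 2) = ∫ t in (0 : ℝ)..1, √(1 - t ^ 2) := by
    have h := intervalIntegral.integral_comp_neg (a := -1) (b := 0) fun t : ℝ ↦ √(1 - t ^ 2)
    simpa only [neg_sq, neg_zero, neg_neg] using h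
  have hsplit := intervalIntegral.integral_add_adjacent_intervals (hint (-1) 0) (hint 0 1)
  rw [integral_sqrt_one_sub_sq, hsymm] at hsplit
  linarith

lemma antitoneOn_sqrt_one_sub_sq : AntitoneOn (fun t : ℝ ↦ √(1 - t ^ 2)) (Set.Ici 0) :=
  fun s hs t _ hst ↦ by
    have hs₀ : 0 ≤ s := hs
    dsimp only
    gcongr

lemma one_le_div_add_log {x y : ℝ} (hx : 1 ≤ x) (hy : 0 < y) : 1 ≤ x / y + Real.log y := by
  have : y⁻¹ ≤ x / y := by
    rw [div_eq_mul_inv]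
    exact le_mul_of_one_le_left (by positivity) hx
  linarith [Real.one_sub_inv_le_log_of_pos hy]

theorem moebius_main_sum_estimate_general {Q : ℝ} (hQ : 1 ≤ Q) {D : ℕ} (hD : D ≠ 0) :
    |2 / Q * (∑ d ∈ Finset.Icc 1 D, ((ArithmeticFunction.moebius d : ℤ) : ℝ) / d *
          ∑ m ∈ Finset.Icc 1 ⌊Q / d⌋₊, √(1 - (d : ℝ) ^ 2 * (m : ℝ) ^ 2 / Q ^ 2)) -
        3 / Real.pi| ≤ 4 * (1 / D + Real.log D / Q) := by
  have hQ₀ : 0 < Q := by linarith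
  have hD₀ : (0 : ℝ) < D := by positivity
  have h := abs_sum_div_mul_sum_sub_le abs_moebius_cast_le_one hasSum_moebius_div_sq
    (antitoneOn_sqrt_one_sub_sq.mono Set.Icc_subset_Ici_self) (Real.sqrt_nonneg _) hQ₀ hD
  simp only [integral_sqrt_one_sub_sq_zero_one, div_pow, mul_pow, zero_pow two_ne_zero, sub_zero,
    Real.sqrt_one, one_mul] at h
  set S := ∑ d ∈ Finset.Icc 1 D, ((ArithmeticFunction.moebius d : ℤ) : ℝ) / d *
    ∑ m ∈ Finset.Icc 1 ⌊Q / d⌋₊, √(1 - (d : ℝ) ^ 2 * (m : ℝ) ^ 2 / Q ^ 2)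
  calc |2 / Q * S - 3 / Real.pi|
      = |2 / Q * (S - Q * (6 / Real.pi ^ 2) * (Real.pi / 4))| := by
        congr 1
        field_simp
        ring
    _ = 2 / Q * |S - Q * (6 / Real.pi ^ 2) * (Real.pi / 4)| := by
        rw [abs_mul, abs_of_pos (by positivity)]
    _ ≤ 2 / Q * (1 + Real.log D + Q * (Real.pi / 4) / D) := by gcongr
    _ ≤ 2 / Q * (Q / D + Real.log D + Real.log D + Q * (4 / 4) / D) := by
        gcongr
        · exact one_le_div_add_log hQ hD₀
        · exact Real.pi_le_four
    _ = 4 * (1 / D + Real.log D / Q) := by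
        field_simp
        ring

/-- Main-term estimate: the contribution of `1 ≤ d ≤ D` is `3/π + O(1/D + log D / Q)`. -/
theorem moebius_main_sum_estimate :
    ∃ C : ℝ, 0 < C ∧ ∀ Q : ℕ, 2 ≤ Q → ∀ D : ℕ, 2 ≤ D → D ≤ Q →
      |(2 / (Q : ℝ)) * (∑ d ∈ Finset.Icc 1 D,
          ((ArithmeticFunction.moebius d : ℤ) : ℝ) / d *
            ∑ m ∈ Finset.Icc 1 (Q / d),
              Real.sqrt (1 - (d : ℝ) ^ 2 * (m : ℝ) ^ 2 / (Q : ℝ) ^ 2)) -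
        3 / Real.pi| ≤ C * (1 / D + Real.log D / Q) := by
  refine ⟨4, four_pos, fun Q hQ D hD _ ↦ ?_⟩
  simpa only [Nat.floor_div_eq_div] using
    moebius_main_sum_estimate_general (Q := Q) (Nat.one_le_cast.2 (by lia)) (D := D) (by lia)
end
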